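/- arXiv:1807.04618 — 8 statements merged into one kernel-verified Lean document; each statement's English description precedes it below -/
import Mathlib

section
/- For every complete listening schedule L there exists a configuration κ ∈ K_BC with discovery time T_κ(L) ≥ max(B)·|C| − 1; hence no complete schedule finishes the discovery of all configurations in fewer than max(B)·|C| time slots. -/
open scoped Classical

/-- A listening schedule over channel set `C`: a set of (channel, time-slot) pairs
such that all scanned channels belong to `C` and at most one channel is scanned
per time slot. -/
def IsSchedule (C : Finset ℕ) (L : Set (ℕ × ℕ)) : Prop :=
  (∀ p ∈ L, p.1 ∈ C) ∧ ∀ c c' t : ℕ, (c, t) ∈ L → (c', t) ∈ L → c = c'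

/-- Configuration `(c, b, δ)` is discovered at time slot `t` by the schedule `L`. -/
def DiscoveredAt (L : Set (ℕ × ℕ)) (c b δ t : ℕ) : Prop :=
  (c, t) ∈ L ∧ t % b = δ

/-- The discovery time `T_κ(L)` of configuration `κ = (c, b, δ)`: the least time slot
at which it is discovered (junk value `0` if it is never discovered). -/
noncomputable def discTime (L : Set (ℕ × ℕ)) (c b δ : ℕ) : ℕ :=
  sInf {t | DiscoveredAt L c b δ t}

/-- A schedule is complete if every configuration in `K_BC` is discovered at some slot. -/
def Complete (C B : Finset ℕ) (L : Set (ℕ × ℕ)) : Prop :=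
  ∀ c ∈ C, ∀ b ∈ B, ∀ δ < b, ∃ t, DiscoveredAt L c b δ t

/-- The set of all configurations `K_BC`, as a finite set of triples `(c, b, δ)`. -/
def KBC (C B : Finset ℕ) : Finset (ℕ × ℕ × ℕ) :=
  (C ×ˢ B ×ˢ Finset.range (B.sup id)).filter fun κ => κ.2.2 < κ.2.1

/-- The weight `P_κ = 1/(b·|B|·|C|)` of a configuration with beacon period `b`. -/
noncomputable def weight (C B : Finset ℕ) (b : ℕ) : ℝ :=
  (1 : ℝ) / ((b : ℝ) * (B.card : ℝ) * (C.card : ℝ))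

/-- Total weight of configurations discovered by `L` at some slot `≤ t` (the NDoT curve). -/
noncomputable def discSum (C B : Finset ℕ) (L : Set (ℕ × ℕ)) (t : ℕ) : ℝ :=
  ∑ κ ∈ (KBC C B).filter (fun κ => ∃ t' ≤ t, DiscoveredAt L κ.1 κ.2.1 κ.2.2 t'),
    weight C B κ.2.1

/-- The mean discovery time `MDT(L) = Σ_{κ ∈ K_BC} P_κ · T_κ(L)`. -/
noncomputable def MDT (C B : Finset ℕ) (L : Set (ℕ × ℕ)) : ℝ :=
  ∑ κ ∈ KBC C B, weight C B κ.2.1 * (discTime L κ.1 κ.2.1 κ.2.2 : ℝ)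

/-- A schedule is recursive if it is complete and, for every `b ∈ B`, every
configuration with beacon period `b` has discovery time at most `b·|C| - 1`. -/
def Recursive (C B : Finset ℕ) (L : Set (ℕ × ℕ)) : Prop :=
  Complete C B L ∧
  ∀ c ∈ C, ∀ b ∈ B, ∀ δ < b, discTime L c b δ ≤ b * C.card - 1

/-- `D(c,t)`: the expected number of new discoveries when scanning channel `c` at slot `t`,
i.e. the sum of weights of configurations `(c, b, t mod b)`, `b ∈ B`, not yet
discovered by `L` before slot `t`. -/
noncomputable def gain (C B : Finset ℕ) (L : Set (ℕ × ℕ)) (c t : ℕ) : ℝ :=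
  ∑ b ∈ B.filter (fun b => ¬ ∃ t' < t, DiscoveredAt L c b (t % b) t'),
    weight C B b

/-- A schedule is greedy if, whenever some channel has positive expected gain at slot `t`,
it scans a channel maximizing the expected gain at slot `t`. -/
def Greedy (C B : Finset ℕ) (L : Set (ℕ × ℕ)) : Prop :=
  IsSchedule C L ∧
  ∀ t : ℕ, (∃ c ∈ C, 0 < gain C B L c t) →
    ∃ c ∈ C, (c, t) ∈ L ∧ ∀ c' ∈ C, gain C B L c' t ≤ gain C B L c t

/-! A time slot scans one channel and has one residue modulo `b`, so it discovers at most one of the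
`b·|C|` configurations with beacon period `b`. Their discovery times are therefore distinct, and the
largest of `b·|C|` distinct natural numbers is at least `b·|C| − 1`. -/

theorem exists_card_le_add_one_of_injOn {α : Type*} {s : Finset α} {f : α → ℕ}
    (hs : s.Nonempty) (hf : Set.InjOn f s) : ∃ x ∈ s, s.card ≤ f x + 1 := by
  obtain ⟨x, hx, hmax⟩ := s.exists_max_image f hs
  have hmaps : Set.MapsTo f s (Finset.range (f x + 1)) := fun y hy =>
    Finset.mem_coe.2 (Finset.mem_range.2 (Nat.lt_succ_of_le (hmax y hy)))
  exact ⟨x, hx, by simpa using Finset.card_le_card_of_injOn f hmaps hf⟩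

section Discovery

variable {L : Set (ℕ × ℕ)} {b : ℕ}

theorem discoveredAt_discTime {c δ : ℕ} (h : ∃ t, DiscoveredAt L c b δ t) :
    DiscoveredAt L c b δ (discTime L c b δ) :=
  Nat.sInf_mem h

theorem injOn_discTime (hL : ∀ c c' t : ℕ, (c, t) ∈ L → (c', t) ∈ L → c = c')
    {s : Set (ℕ × ℕ)} (hs : ∀ p ∈ s, ∃ t, DiscoveredAt L p.1 b p.2 t) :
    Set.InjOn (fun p : ℕ × ℕ => discTime L p.1 b p.2) s := by
  rintro ⟨c, δ⟩ hp ⟨c', δ'⟩ hq (heq : discTime L c b δ = discTime L c' b δ')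
  obtain ⟨hc, hδ⟩ := discoveredAt_discTime (hs _ hp)
  obtain ⟨hc', hδ'⟩ := discoveredAt_discTime (hs _ hq)
  rw [← heq] at hc' hδ'
  exact Prod.ext (hL _ _ _ hc hc') (hδ.symm.trans hδ')

theorem stmt1_general {C : Finset ℕ} (hC : C.Nonempty) (hb : 0 < b)
    (hL : ∀ c c' t : ℕ, (c, t) ∈ L → (c', t) ∈ L → c = c')
    (hdisc : ∀ c ∈ C, ∀ δ < b, ∃ t, DiscoveredAt L c b δ t) :
    ∃ c ∈ C, ∃ δ < b, b * C.card ≤ discTime L c b δ + 1 := by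
  have hne : (C ×ˢ Finset.range b).Nonempty := hC.product (Finset.nonempty_range_iff.2 hb.ne')
  have hinj : Set.InjOn (fun p : ℕ × ℕ => discTime L p.1 b p.2) ↑(C ×ˢ Finset.range b) :=
    injOn_discTime hL fun p hp =>
      have ⟨hc, hδ⟩ := Finset.mem_product.1 hp
      hdisc p.1 hc p.2 (Finset.mem_range.1 hδ)
  obtain ⟨⟨c, δ⟩, hp, hcard⟩ := exists_card_le_add_one_of_injOn hne hinj
  obtain ⟨hc, hδ⟩ := Finset.mem_product.1 hp
  rw [Finset.card_product, Finset.card_range, mul_comm] at hcard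
  exact ⟨c, hc, δ, Finset.mem_range.1 hδ, hcard⟩

end Discovery

/-- every complete listening schedule has a configuration with
discovery time at least `max(B)·|C| − 1`. -/
theorem stmt1 (C B : Finset ℕ) (hC : C.Nonempty) (hB : B.Nonempty)
    (hBpos : ∀ b ∈ B, 0 < b)
    (L : Set (ℕ × ℕ)) (hL : IsSchedule C L) (hcomp : Complete C B L) :
    ∃ c ∈ C, ∃ b ∈ B, ∃ δ < b, B.max' hB * C.card - 1 ≤ discTime L c b δ := by
  have hm := B.max'_mem hB
  obtain ⟨c, hc, δ, hδ, hle⟩ :=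
    stmt1_general hC (hBpos _ hm) hL.2 fun c hc => hcomp c hc _ hm
  exact ⟨c, hc, _, hm, δ, hδ, Nat.sub_le_of_le_add hle⟩
end

section
/- If B ∈ 𝔽₃, then a recursive schedule exists, i.e., there is a listening schedule L that is complete and such that for every b ∈ B every configuration with beacon period b has discovery time at most b·|C| − 1. -/
open scoped Classical

/-!
Choose the channels greedily, slot by slot. Slots `s < t` conflict if some period `b ∈ B` with
`t < b * |C|` sees them in the same phase. As `B` is a divisibility chain, every conflict at `t` is
already a conflict for the least such `b`, so `t` has at most `t / b < |C|` conflicting predecessors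
and some channel avoids all of theirs. For each `b`, the first `b * |C|` slots then have pairwise
distinct (phase, channel) pairs, and there are only `b * |C|` such pairs, so every one of them
occurs.
-/

section GreedyChoice

variable {ι α : Type*} [LT ι] [WellFoundedLT ι]

theorem exists_forall_mem_and_ne_of_card_lt {C : Finset α} {N : ι → Finset ι}
    (hN : ∀ t, ∀ s ∈ N t, s < t) (hcard : ∀ t, (N t).card < C.card) :
    ∃ f : ι → α, (∀ t, f t ∈ C) ∧ ∀ t, ∀ s ∈ N t, f s ≠ f t := by
  have exists_fresh (t : ι) (g : ∀ s, s < t → α) :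
      ∃ c ∈ C, ∀ s (hs : s ∈ N t), g s (hN t s hs) ≠ c := by
    let used : Finset α := (N t).attach.image fun s => g s.1 (hN t s.1 s.2)
    have used_card_lt : used.card < C.card :=
      Finset.card_image_le.trans_lt (by simpa only [Finset.card_attach] using hcard t)
    obtain ⟨c, hc, hc_fresh⟩ := Finset.exists_mem_notMem_of_card_lt_card used_card_lt
    refine ⟨c, hc, fun s hs hsc => hc_fresh ?_⟩
    exact Finset.mem_image.2 ⟨⟨s, hs⟩, Finset.mem_attach _ _, hsc⟩
  choose pick pick_mem pick_ne using exists_fresh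
  let f : ι → α := wellFounded_lt.fix pick
  have f_eq (t : ι) : f t = pick t fun s _ => f s := wellFounded_lt.fix_eq pick t
  refine ⟨f, fun t => f_eq t ▸ pick_mem _ _, fun t s hs => ?_⟩
  rw [f_eq t]
  exact pick_ne t (fun s _ => f s) s hs

end GreedyChoice

section Conflicts

/-- The slots before `t` whose channel must not be scanned again at `t`: those in the same phase as
`t` for some period `b ∈ B` whose window `[0, b * m)` contains `t`. Here `m` stands for the number
of channels. -/
noncomputable def conflictSlots (B : Set ℕ) (m t : ℕ) : Finset ℕ :=
  {s ∈ Finset.range t | ∃ b ∈ B, t < b * m ∧ s ≡ t [MOD b]}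

variable {B : Set ℕ} {b m t : ℕ}

theorem lt_of_mem_conflictSlots {s : ℕ} (hs : s ∈ conflictSlots B m t) : s < t :=
  Finset.mem_range.1 (Finset.mem_of_mem_filter s hs)

theorem card_filter_range_modEq_self_lt (ht : t < b * m) :
    ((Finset.range t).filter (· ≡ t [MOD b])).card < m := by
  have hb : 0 < b := Nat.pos_of_mul_pos_right (Nat.zero_lt_of_lt ht)
  rw [← Nat.count_eq_card_filter_range, Nat.count_modEq_card t hb, if_neg (lt_irrefl _)]
  exact Nat.div_lt_of_lt_mul ht

theorem exists_mem_forall_dvd_of_isChain (hB : IsChain (· ∣ ·) B) (hb : b ∈ B) (ht : t < b * m) :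
    ∃ a ∈ B, t < a * m ∧ ∀ b ∈ B, t < b * m → a ∣ b := by
  obtain ⟨a, ⟨ha, hat⟩, a_min⟩ :=
    exists_minimal_of_wellFoundedLT (fun b => b ∈ B ∧ t < b * m) ⟨b, hb, ht⟩
  refine ⟨a, ha, hat, fun b hb hbt => ?_⟩
  rcases hB.total ha hb with hab | hba
  · exact hab
  · have ha_pos : 0 < a := Nat.pos_of_mul_pos_right (Nat.zero_lt_of_lt hat)
    have b_le_a : b ≤ a := Nat.le_of_dvd ha_pos hba
    exact (le_antisymm (a_min ⟨hb, hbt⟩ b_le_a) b_le_a).dvd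

theorem card_conflictSlots_lt (hB : IsChain (· ∣ ·) B) (hm : 0 < m) (t : ℕ) :
    (conflictSlots B m t).card < m := by
  by_cases h : ∃ b ∈ B, t < b * m
  · obtain ⟨b, hb, hbt⟩ := h
    obtain ⟨a, -, hat, a_dvd⟩ := exists_mem_forall_dvd_of_isChain hB hb hbt
    refine (Finset.card_le_card ?_).trans_lt (card_filter_range_modEq_self_lt hat)
    refine Finset.monotone_filter_right _ ?_
    rintro s - ⟨b', hb', hbt', hst⟩
    exact hst.of_dvd (a_dvd b' hb' hbt')
  · have no_conflicts : conflictSlots B m t = ∅ :=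
      Finset.filter_eq_empty_iff.2 fun _ _ ⟨b, hb, hbt, _⟩ => h ⟨b, hb, hbt⟩
    rwa [no_conflicts, Finset.card_empty]

variable {α : Type*} {f : ℕ → α}

theorem injOn_mod_prodMk_of_forall_conflictSlots_ne
    (hf : ∀ t, ∀ s ∈ conflictSlots B m t, f s ≠ f t) (hb : b ∈ B) :
    Set.InjOn (fun t => (t % b, f t)) (Set.Iio (b * m)) := by
  have ne_of_lt {s t : ℕ} (hst : s < t) (ht : t < b * m) : (s % b, f s) ≠ (t % b, f t) := by
    intro heq
    obtain ⟨hmod, hfst⟩ := Prod.mk.inj heq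
    exact hf t s (Finset.mem_filter.2 ⟨Finset.mem_range.2 hst, b, hb, ht, hmod⟩) hfst
  intro s hs t ht heq
  rcases lt_trichotomy s t with hst | hst | hst
  · exact absurd heq (ne_of_lt hst ht)
  · exact hst
  · exact absurd heq.symm (ne_of_lt hst hs)

theorem exists_lt_mod_eq_and_eq_of_injOn {C : Finset α} (hfC : ∀ t, f t ∈ C)
    (hf : Set.InjOn (fun t => (t % b, f t)) (Set.Iio (b * C.card)))
    {c : α} (hc : c ∈ C) {δ : ℕ} (hδ : δ < b) :
    ∃ t < b * C.card, t % b = δ ∧ f t = c := by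
  have surj : Set.SurjOn (fun t => (t % b, f t)) (Finset.range (b * C.card))
      (Finset.range b ×ˢ C : Finset (ℕ × α)) := by
    refine Finset.surjOn_of_injOn_of_card_le _ (fun t _ => ?_) ?_ ?_
    · exact Finset.mem_product.2 ⟨Finset.mem_range.2 (Nat.mod_lt t (Nat.zero_lt_of_lt hδ)), hfC t⟩
    · rwa [Finset.coe_range]
    · rw [Finset.card_product, Finset.card_range, Finset.card_range]
  have pair_mem : (δ, c) ∈ Finset.range b ×ˢ C :=
    Finset.mem_product.2 ⟨Finset.mem_range.2 hδ, hc⟩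
  obtain ⟨t, ht, htc⟩ := surj pair_mem
  exact ⟨t, Finset.mem_range.1 ht, Prod.mk.inj htc⟩

end Conflicts

theorem isSchedule_setOf_apply_snd_eq_fst {C : Finset ℕ} {f : ℕ → ℕ} (hfC : ∀ t, f t ∈ C) :
    IsSchedule C {p | f p.2 = p.1} :=
  ⟨fun p (hp : f p.2 = p.1) => hp ▸ hfC p.2,
    fun c c' t (hc : f t = c) (hc' : f t = c') => hc.symm.trans hc'⟩

theorem recursive_of_forall_exists_discoveredAt_lt {C B : Finset ℕ} {L : Set (ℕ × ℕ)}
    (h : ∀ c ∈ C, ∀ b ∈ B, ∀ δ < b, ∃ t < b * C.card, DiscoveredAt L c b δ t) :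
    Recursive C B L := by
  refine ⟨fun c hc b hb δ hδ => ?_, fun c hc b hb δ hδ => ?_⟩
  · obtain ⟨t, -, hdisc⟩ := h c hc b hb δ hδ
    exact ⟨t, hdisc⟩
  · obtain ⟨t, ht, hdisc⟩ := h c hc b hb δ hδ
    exact (Nat.sInf_le hdisc).trans (Nat.le_sub_one_of_lt ht)

theorem stmt5_general (C : Finset ℕ) (hC : C.Nonempty) (B : Set ℕ) (hB : IsChain (· ∣ ·) B) :
    ∃ L : Set (ℕ × ℕ), IsSchedule C L ∧
      ∀ c ∈ C, ∀ b ∈ B, ∀ δ < b, ∃ t < b * C.card, DiscoveredAt L c b δ t := by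
  obtain ⟨f, hfC, hf⟩ := exists_forall_mem_and_ne_of_card_lt
    (fun _ _ => lt_of_mem_conflictSlots) (card_conflictSlots_lt hB hC.card_pos)
  refine ⟨{p | f p.2 = p.1}, isSchedule_setOf_apply_snd_eq_fst hfC, fun c hc b hb δ hδ => ?_⟩
  obtain ⟨t, ht, hmod, hft⟩ := exists_lt_mod_eq_and_eq_of_injOn hfC
    (injOn_mod_prodMk_of_forall_conflictSlots_ne hf hb) hc hδ
  exact ⟨t, ht, hft, hmod⟩

/-- if `B ∈ 𝔽₃` (totally ordered by divisibility), a recursive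
schedule exists. -/
theorem stmt5 (C B : Finset ℕ) (hC : C.Nonempty) (hB : B.Nonempty)
    (hBpos : ∀ b ∈ B, 0 < b)
    (hF3 : ∀ b ∈ B, ∀ b' ∈ B, b ∣ b' ∨ b' ∣ b) :
    ∃ L : Set (ℕ × ℕ), IsSchedule C L ∧ Recursive C B L := by
  obtain ⟨L, hL, hdisc⟩ := stmt5_general C hC B fun b hb b' hb' _ => hF3 b hb b' hb'
  exact ⟨L, hL, recursive_of_forall_exists_discoveredAt_lt hdisc⟩
end

section
/- Let B' ∈ 𝔽₃, let L' be a recursive schedule for the BP set B', and let b'' be a positive integer with max(B') ∣ b'' and b'' > max(B'). Then there exists a recursive schedule L'' for the BP set B'' = B' ∪ {b''} such that {(c,t) ∈ L' : t ≤ max(B')·|C| − 1} ⊆ L'', i.e., L'' scans the same channels as L' during the first max(B')·|C| time slots. -/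
open scoped Classical

/-!
A residue class modulo `m` meets the first `m * |C|` slots in exactly `|C|` slots. If all `|C|`
configurations with period `m` and a given offset are discovered there, then by counting each of
these slots is used for a different channel. If `m ∣ b`, a residue class modulo `b` lies inside one
modulo `m`, so what has been scanned of it is a partial injection from its first `|C|` slots to the
channels; extending all these partial injections to bijections yields the schedule.
-/

/-- Every configuration with beacon period `b` is discovered by `L` during the first `b * |C|`
slots: the requirement that recursiveness imposes on a single period. -/
def DiscoversInTime (C : Finset ℕ) (L : Set (ℕ × ℕ)) (b : ℕ) : Prop :=
  ∀ c ∈ C, ∀ δ < b, ∃ t < b * C.card, DiscoveredAt L c b δ t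

/-- The schedule that listens during `|C|` consecutive blocks of `b` slots, where the channel at
offset `δ` of block `i` is `σ δ i`. For `0 < b`, only the values of `σ` at `δ < b` matter. -/
def blockSchedule (C : Finset ℕ) (b : ℕ) (σ : ℕ → Finset.range C.card ≃ C) : Set (ℕ × ℕ) :=
  {p | ∃ i : Finset.range C.card, p.2 / b = i ∧ σ (p.2 % b) i = p.1}

section

variable {C B : Finset ℕ} {L L₂ : Set (ℕ × ℕ)} {m b δ : ℕ}
  {σ : ℕ → Finset.range C.card ≃ C}

theorem recursive_iff_forall_discoversInTime :
    Recursive C B L ↔ ∀ b ∈ B, DiscoversInTime C L b := by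
  constructor
  · rintro ⟨hcomplete, htime⟩ b hb c hc δ hδ
    have hpos : 0 < b * C.card :=
      Nat.mul_pos (Nat.zero_lt_of_lt hδ) (Finset.card_pos.2 ⟨c, hc⟩)
    have hle : discTime L c b δ ≤ b * C.card - 1 := htime c hc b hb δ hδ
    exact ⟨discTime L c b δ, by omega, Nat.sInf_mem (hcomplete c hc b hb δ hδ)⟩
  · intro h
    refine ⟨fun c hc b hb δ hδ => ?_, fun c hc b hb δ hδ => ?_⟩
    · obtain ⟨t, -, ht⟩ := h b hb c hc δ hδ
      exact ⟨t, ht⟩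
    · obtain ⟨t, htlt, ht⟩ := h b hb c hc δ hδ
      exact (Nat.sInf_le ht).trans (Nat.le_sub_one_of_lt htlt)

theorem DiscoversInTime.of_prefix_subset (h : DiscoversInTime C L b) (hbm : b ≤ m)
    (hsub : {p ∈ L | p.2 < m * C.card} ⊆ L₂) : DiscoversInTime C L₂ b := by
  intro c hc δ hδ
  obtain ⟨t, htlt, htL, htmod⟩ := h c hc δ hδ
  exact ⟨t, htlt, hsub ⟨htL, htlt.trans_le (Nat.mul_le_mul_right _ hbm)⟩, htmod⟩

theorem isSchedule_blockSchedule : IsSchedule C (blockSchedule C b σ) := by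
  refine ⟨?_, ?_⟩
  · rintro p ⟨i, -, hp⟩
    exact hp ▸ (σ (p.2 % b) i).2
  · rintro c c' t ⟨i, hi, hc⟩ ⟨j, hj, hc'⟩
    obtain rfl : i = j := Subtype.ext (hi.symm.trans hj)
    exact hc.symm.trans hc'

theorem discoversInTime_blockSchedule : DiscoversInTime C (blockSchedule C b σ) b := by
  intro c hc δ hδ
  have hb : 0 < b := Nat.zero_lt_of_lt hδ
  let i := (σ δ).symm ⟨c, hc⟩
  have hmod : (δ + b * i) % b = δ := by rw [Nat.add_mul_mod_self_left, Nat.mod_eq_of_lt hδ]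
  have hdiv : (δ + b * i) / b = i := by
    rw [Nat.add_mul_div_left _ _ hb, Nat.div_eq_of_lt hδ, zero_add]
  refine ⟨δ + b * i, ?_, ⟨i, hdiv, ?_⟩, hmod⟩
  · rw [mul_comm b C.card, ← Nat.div_lt_iff_lt_mul hb, hdiv]
    exact Finset.mem_range.1 i.2
  · simp only [hmod, i, Equiv.apply_symm_apply]

theorem IsSchedule.exists_equiv_forall_mem (hL : IsSchedule C L) (h : DiscoversInTime C L m)
    (hδ : δ < m) : ∃ e : Finset.range C.card ≃ C, ∀ i, ((e i : ℕ), δ + m * i) ∈ L := by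
  choose slot hlt hmem hmod using fun c : C => h c c.2 δ hδ
  let block (c : C) : Finset.range C.card :=
    ⟨slot c / m, Finset.mem_range.2 (Nat.div_lt_of_lt_mul (hlt c))⟩
  have hslot (c : C) : δ + m * block c = slot c := by
    rw [← hmod c, Nat.mod_add_div]
  have hinj : Function.Injective block := by
    intro c d hcd
    have heq : slot c = slot d := by rw [← hslot c, ← hslot d, hcd]
    exact Subtype.ext (hL.2 c d (slot c) (hmem c) (heq ▸ hmem d))
  have hbij : Function.Bijective block :=
    (Fintype.bijective_iff_injective_and_card block).2 ⟨hinj, by simp⟩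
  refine ⟨(Equiv.ofBijective block hbij).symm, fun i => ?_⟩
  obtain ⟨c, rfl⟩ := hbij.surjective i
  rw [Equiv.ofBijective_symm_apply_apply, hslot]
  exact hmem c

theorem IsSchedule.exists_prefix_subset_blockSchedule (hL : IsSchedule C L)
    (h : DiscoversInTime C L m) :
    ∃ σ, {p ∈ L | p.2 < m * C.card} ⊆ blockSchedule C m σ := by
  have hequiv (δ : ℕ) : ∃ e : Finset.range C.card ≃ C,
      δ < m → ∀ i, ((e i : ℕ), δ + m * i) ∈ L := by
    by_cases hδ : δ < m
    · obtain ⟨e, he⟩ := hL.exists_equiv_forall_mem h hδ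
      exact ⟨e, fun _ => he⟩
    · exact ⟨Finset.equivOfCardEq (Finset.card_range _), fun hδ' => absurd hδ' hδ⟩
  choose σ hσ using hequiv
  refine ⟨σ, ?_⟩
  rintro ⟨c, t⟩ ⟨hct, ht : t < m * C.card⟩
  let i : Finset.range C.card := ⟨t / m, Finset.mem_range.2 (Nat.div_lt_of_lt_mul ht)⟩
  have hm : 0 < m := Nat.pos_of_mul_pos_right (Nat.zero_lt_of_lt ht)
  have hmem := hσ (t % m) (Nat.mod_lt t hm) i
  rw [Nat.mod_add_div] at hmem
  exact ⟨i, rfl, hL.2 _ _ t hmem hct⟩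

theorem exists_perm_range_extending {n : ℕ} {f : ℕ → ℕ} (hf : Function.Injective f) :
    ∃ π : Equiv.Perm (Finset.range n), ∀ i : Finset.range n, f i < n → (π i : ℕ) = f i :=
  Set.MapsTo.exists_equiv_extend_of_card_eq (Fintype.card_coe _)
    (s := {i : Finset.range n | f i < n}) (f := fun i => f i)
    (fun _ hi => Finset.mem_coe.2 (Finset.mem_range.2 hi))
    (hf.comp Subtype.val_injective).injOn

theorem exists_blockSchedule_subset_of_dvd (σ : ℕ → Finset.range C.card ≃ C) (hb : 0 < b)
    (hdvd : m ∣ b) : ∃ τ, blockSchedule C m σ ⊆ blockSchedule C b τ := by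
  obtain ⟨k, rfl⟩ := hdvd
  have hk : 0 < k := Nat.pos_of_mul_pos_left hb
  -- Slot `r + m * k * i` lies in block `r / m + k * i` of length `m`.
  have hinj (r : ℕ) : Function.Injective fun i => r / m + k * i := fun i j hij =>
    Nat.eq_of_mul_eq_mul_left hk (Nat.add_left_cancel hij)
  choose π hπ using fun r => exists_perm_range_extending (n := C.card) (hinj r)
  refine ⟨fun r => (π r).trans (σ (r % m)), ?_⟩
  rintro ⟨c, t⟩ ⟨j, hj : t / m = j, hσ : (σ (t % m) j : ℕ) = c⟩
  have hj_lt : t / m < C.card := hj ▸ Finset.mem_range.1 j.2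
  have hi_lt : t / (m * k) < C.card := by
    rw [← Nat.div_div_eq_div_mul]
    exact (Nat.div_le_self _ _).trans_lt hj_lt
  have hblock : t % (m * k) / m + k * (t / (m * k)) = t / m := by
    rw [Nat.mod_mul_right_div_self, ← Nat.div_div_eq_div_mul, Nat.mod_add_div]
  let i : Finset.range C.card := ⟨t / (m * k), Finset.mem_range.2 hi_lt⟩
  have hπi : π (t % (m * k)) i = j :=
    Subtype.ext ((hπ _ i (hblock.trans_lt hj_lt)).trans (hblock.trans hj))
  refine ⟨i, rfl, ?_⟩
  rw [Equiv.trans_apply, hπi, Nat.mod_mul_right_mod, hσ]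

theorem IsSchedule.exists_extension_discoversInTime (hL : IsSchedule C L)
    (h : DiscoversInTime C L m) (hb : 0 < b) (hdvd : m ∣ b) :
    ∃ L₂, IsSchedule C L₂ ∧ DiscoversInTime C L₂ b ∧ {p ∈ L | p.2 < m * C.card} ⊆ L₂ := by
  obtain ⟨σ, hσ⟩ := hL.exists_prefix_subset_blockSchedule h
  obtain ⟨τ, hτ⟩ := exists_blockSchedule_subset_of_dvd σ hb hdvd
  exact ⟨blockSchedule C b τ, isSchedule_blockSchedule, discoversInTime_blockSchedule,
    hσ.trans hτ⟩

end

theorem stmt6_general (C B' : Finset ℕ) (hB' : B'.Nonempty) (L' : Set (ℕ × ℕ))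
    (hL' : IsSchedule C L') (hrec : Recursive C B' L')
    (b'' : ℕ) (hdvd : B'.max' hB' ∣ b'') (hb'' : 0 < b'') :
    ∃ L'' : Set (ℕ × ℕ), IsSchedule C L'' ∧ Recursive C (insert b'' B') L'' ∧
      {p ∈ L' | p.2 ≤ B'.max' hB' * C.card - 1} ⊆ L'' := by
  have hperiods := recursive_iff_forall_discoversInTime.1 hrec
  obtain ⟨L'', hL'', hdisc, hsub⟩ :=
    hL'.exists_extension_discoversInTime (hperiods _ (B'.max'_mem hB')) hb'' hdvd
  refine ⟨L'', hL'', recursive_iff_forall_discoversInTime.2 ?_, ?_⟩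
  · rw [Finset.forall_mem_insert]
    exact ⟨hdisc, fun b hb => (hperiods b hb).of_prefix_subset (B'.le_max' b hb) hsub⟩
  · rintro p ⟨hp, hle⟩
    have hpos : 0 < B'.max' hB' * C.card :=
      Nat.mul_pos (Nat.pos_of_dvd_of_pos hdvd hb'') (Finset.card_pos.2 ⟨p.1, hL'.1 p hp⟩)
    exact hsub ⟨hp, Nat.lt_of_le_sub_one hpos hle⟩

/-- a recursive schedule for `B' ∈ 𝔽₃` can be extended to a recursive
schedule for `B'' = B' ∪ {b''}`, where `max(B') ∣ b''` and `b'' > max(B')`, scanning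
the same channels during the first `max(B')·|C|` time slots. -/
theorem stmt6 (C B' : Finset ℕ) (hC : C.Nonempty) (hB' : B'.Nonempty)
    (hBpos : ∀ b ∈ B', 0 < b)
    (hF3 : ∀ b ∈ B', ∀ b2 ∈ B', b ∣ b2 ∨ b2 ∣ b)
    (L' : Set (ℕ × ℕ)) (hL' : IsSchedule C L') (hrec : Recursive C B' L')
    (b'' : ℕ) (hdvd : B'.max' hB' ∣ b'') (hgt : B'.max' hB' < b'') :
    ∃ L'' : Set (ℕ × ℕ), IsSchedule C L'' ∧ Recursive C (insert b'' B') L'' ∧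
      {p ∈ L' | p.2 ≤ B'.max' hB' * C.card - 1} ⊆ L'' :=
  stmt6_general C B' hB' L' hL' hrec b'' hdvd (Nat.zero_lt_of_lt hgt)
end

section
/- If B ∈ 𝔽₂, then every greedy schedule is WDT-optimal: it is complete and every configuration in K_BC has discovery time at most max(B)·|C| − 1. -/
open scoped Classical

/-!
Let `M` be a positive common multiple of the beacon periods. A channel scanned at slot `s` has zero
gain at every later slot `t ≡ s [MOD M]`, since all configurations it could discover at `t` were
discovered at `s`. Consider the `|C|` slots `δ + j * M` with `j < |C|`. As long as `(c, b, δ)` is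
undiscovered, `c` has positive gain at these slots, so each of them scans a channel other than `c`
not scanned at the previous ones, and there are only `|C| - 1` such channels.
-/

section

variable {C B T : Finset ℕ} {L : Set (ℕ × ℕ)} {b c s t δ M : ℕ}

theorem discTime_le (h : DiscoveredAt L c b δ t) : discTime L c b δ ≤ t :=
  Nat.sInf_le h

theorem weight_pos (hC : C.Nonempty) (hb : b ∈ B) (hb₀ : 0 < b) : 0 < weight C B b := by
  have hB : B.Nonempty := ⟨b, hb⟩
  unfold weight
  positivity

theorem gain_pos_of_not_discovered (hC : C.Nonempty) (hBpos : ∀ b ∈ B, 0 < b) (hb : b ∈ B)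
    (h : ∀ t' < t, ¬DiscoveredAt L c b (t % b) t') : 0 < gain C B L c t :=
  Finset.sum_pos
    (fun b' hb' ↦
      have hb'B : b' ∈ B := Finset.mem_of_mem_filter b' hb'
      weight_pos hC hb'B (hBpos b' hb'B))
    ⟨b, Finset.mem_filter.mpr ⟨hb, fun ⟨t', ht', hdisc⟩ ↦ h t' ht' hdisc⟩⟩

theorem gain_eq_zero_of_mem_of_modEq (hs : (c, s) ∈ L) (hst : s < t)
    (hmod : ∀ b ∈ B, s ≡ t [MOD b]) : gain C B L c t = 0 := by
  have all_discovered : B.filter (fun b ↦ ¬∃ t' < t, DiscoveredAt L c b (t % b) t') = ∅ :=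
    Finset.filter_eq_empty_iff.mpr fun b hb hnot ↦ hnot ⟨s, hst, hs, hmod b hb⟩
  rw [gain, all_discovered, Finset.sum_empty]

theorem Greedy.exists_mem_and_gain_pos (hg : Greedy C B L) (hc : c ∈ C)
    (hpos : 0 < gain C B L c t) : ∃ d ∈ C, (d, t) ∈ L ∧ 0 < gain C B L d t := by
  obtain ⟨d, hd, hdL, hmax⟩ := hg.2 t ⟨c, hc, hpos⟩
  exact ⟨d, hd, hdL, hpos.trans_le (hmax c hc)⟩

theorem injOn_of_gain_pos {f : ℕ → ℕ} (hT : ∀ s ∈ T, ∀ t ∈ T, ∀ b ∈ B, s ≡ t [MOD b])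
    (hfL : ∀ t ∈ T, (f t, t) ∈ L) (hfpos : ∀ t ∈ T, 0 < gain C B L (f t) t) :
    Set.InjOn f T := by
  have ne_of_lt : ∀ s ∈ T, ∀ t ∈ T, s < t → f s ≠ f t := fun s hs t ht hst hf ↦
    (hfpos t ht).ne' (gain_eq_zero_of_mem_of_modEq (hf ▸ hfL s hs) hst (hT s hs t ht))
  intro s hs t ht hf
  by_contra hne
  rcases Nat.lt_or_gt_of_ne hne with hst | hts
  · exact ne_of_lt s hs t ht hst hf
  · exact ne_of_lt t ht s hs hts hf.symm

theorem Greedy.card_lt_card_of_not_discovered (hg : Greedy C B L) (hBpos : ∀ b ∈ B, 0 < b)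
    (hT : ∀ s ∈ T, ∀ t ∈ T, ∀ b ∈ B, s ≡ t [MOD b]) (hc : c ∈ C) (hb : b ∈ B)
    (hnot : ∀ t ∈ T, ∀ t' ≤ t, ¬DiscoveredAt L c b (t % b) t') : T.card < C.card := by
  have exists_scanned : ∀ t ∈ T, ∃ d ∈ C, (d, t) ∈ L ∧ 0 < gain C B L d t := fun t ht ↦
    hg.exists_mem_and_gain_pos hc <| gain_pos_of_not_discovered ⟨c, hc⟩ hBpos hb
      fun t' ht' ↦ hnot t ht t' ht'.le
  choose! f hfC hfL hfpos using exists_scanned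
  have f_ne : ∀ t ∈ T, f t ≠ c := fun t ht hf ↦ hnot t ht t le_rfl ⟨hf ▸ hfL t ht, rfl⟩
  calc T.card
      ≤ (C.erase c).card := Finset.card_le_card_of_injOn f
        (fun t ht ↦ Finset.mem_erase.mpr ⟨f_ne t ht, hfC t ht⟩) (injOn_of_gain_pos hT hfL hfpos)
    _ < C.card := Finset.card_erase_lt_of_mem hc

theorem Greedy.exists_discoveredAt_le_of_card_le (hg : Greedy C B L) (hBpos : ∀ b ∈ B, 0 < b)
    (hT : ∀ s ∈ T, ∀ t ∈ T, ∀ b ∈ B, s ≡ t [MOD b]) (hcard : C.card ≤ T.card)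
    (hc : c ∈ C) (hb : b ∈ B) : ∃ t ∈ T, ∃ t' ≤ t, DiscoveredAt L c b (t % b) t' := by
  by_contra! hnot
  exact hcard.not_gt (hg.card_lt_card_of_not_discovered hBpos hT hc hb hnot)

theorem Greedy.exists_discoveredAt_le (hg : Greedy C B L) (hM : 0 < M) (hdvd : ∀ b ∈ B, b ∣ M)
    (hc : c ∈ C) (hb : b ∈ B) (hδ : δ < b) :
    ∃ t ≤ M * C.card - 1, DiscoveredAt L c b δ t := by
  have hBpos : ∀ b ∈ B, 0 < b := fun b hb ↦ Nat.pos_of_dvd_of_pos (hdvd b hb) hM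
  have modEq : ∀ j, ∀ b ∈ B, δ + M * j ≡ δ [MOD b] := fun j b hb ↦
    (Nat.modEq_zero_iff_dvd.mpr ((hdvd b hb).mul_right j)).add_left δ
  let slots := (Finset.range C.card).image (δ + M * ·)
  have slots_card : slots.card = C.card := by
    rw [Finset.card_image_of_injective _ fun i j hij ↦
      Nat.eq_of_mul_eq_mul_left hM (Nat.add_left_cancel hij), Finset.card_range]
  have slots_modEq : ∀ s ∈ slots, ∀ t ∈ slots, ∀ b ∈ B, s ≡ t [MOD b] := by
    simp only [slots, Finset.forall_mem_image]
    exact fun i _ j _ b hb ↦ (modEq i b hb).trans (modEq j b hb).symm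
  obtain ⟨t, ht, t', ht', hdisc⟩ :=
    hg.exists_discoveredAt_le_of_card_le hBpos slots_modEq slots_card.ge hc hb
  obtain ⟨j, hj, rfl⟩ := Finset.mem_image.mp ht
  refine ⟨t', Nat.le_sub_one_of_lt ?_, ?_⟩
  · calc t' ≤ δ + M * j := ht'
      _ < M + M * j := by gcongr; exact hδ.trans_le (Nat.le_of_dvd hM (hdvd b hb))
      _ = M * (j + 1) := by ring
      _ ≤ M * C.card := by gcongr; exact Finset.mem_range.mp hj
  · rwa [modEq j b hb, Nat.mod_eq_of_lt hδ] at hdisc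

end

theorem stmt7_general (C B : Finset ℕ) (M : ℕ) (hM : 0 < M) (hdvd : ∀ b ∈ B, b ∣ M)
    (L : Set (ℕ × ℕ)) (hg : Greedy C B L) :
    Complete C B L ∧
      ∀ c ∈ C, ∀ b ∈ B, ∀ δ < b, discTime L c b δ ≤ M * C.card - 1 := by
  refine ⟨fun c hc b hb δ hδ ↦ ?_, fun c hc b hb δ hδ ↦ ?_⟩ <;>
    obtain ⟨t, ht, hdisc⟩ := hg.exists_discoveredAt_le hM hdvd hc hb hδ
  · exact ⟨t, hdisc⟩
  · exact (discTime_le hdisc).trans ht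

/-- if `B ∈ 𝔽₂` (every `b ∈ B` divides `max(B)`), every greedy
schedule is WDT-optimal: complete with all discovery times at most `max(B)·|C| − 1`. -/
theorem stmt7 (C B : Finset ℕ) (hC : C.Nonempty) (hB : B.Nonempty)
    (hBpos : ∀ b ∈ B, 0 < b)
    (hF2 : ∀ b ∈ B, b ∣ B.max' hB)
    (L : Set (ℕ × ℕ)) (hg : Greedy C B L) :
    Complete C B L ∧
      ∀ c ∈ C, ∀ b ∈ B, ∀ δ < b, discTime L c b δ ≤ B.max' hB * C.card - 1 := by
  exact stmt7_general C B (B.max' hB) (hBpos _ (B.max'_mem hB)) hF2 L hg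
end

section
/- Let B ∈ 𝔽₂ and let L be a listening schedule. If (c,t) ∈ L and there exists t' < t with t' ≡ t (mod max(B)) and (c,t') ∈ L, then no configuration in K_BC has discovery time equal to t, i.e., the scan at slot t results in zero new discoveries. -/
open scoped Classical

theorem DiscoveredAt.of_modEq {L : Set (ℕ × ℕ)} {c b δ t t' : ℕ}
    (hdisc : DiscoveredAt L c b δ t) (hct' : (c, t') ∈ L) (hmod : t' ≡ t [MOD b]) :
    DiscoveredAt L c b δ t' :=
  ⟨hct', Eq.trans hmod hdisc.2⟩

theorem stmt8_general {C : Finset ℕ} {L : Set (ℕ × ℕ)} (hL : IsSchedule C L)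
    {c c' b δ t t' : ℕ} (hct : (c, t) ∈ L) (ht' : t' < t) (hmod : t' ≡ t [MOD b])
    (hct' : (c, t') ∈ L) :
    ¬ (DiscoveredAt L c' b δ t ∧ ∀ s < t, ¬ DiscoveredAt L c' b δ s) := by
  rintro ⟨hdisc, hfirst⟩
  obtain rfl : c = c' := hL.2 c c' t hct hdisc.1
  exact hfirst t' ht' (hdisc.of_modEq hct' hmod)

/-- for `B ∈ 𝔽₂`, if channel `c` is scanned at slot `t` but was already
scanned at some earlier slot `t' ≡ t (mod max(B))`, then no configuration has
discovery time equal to `t`. -/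
theorem stmt8 (C B : Finset ℕ) (hC : C.Nonempty) (hB : B.Nonempty)
    (hBpos : ∀ b ∈ B, 0 < b)
    (hF2 : ∀ b ∈ B, b ∣ B.max' hB)
    (L : Set (ℕ × ℕ)) (hL : IsSchedule C L)
    (c t t' : ℕ) (hct : (c, t) ∈ L) (ht' : t' < t)
    (hmod : t' % B.max' hB = t % B.max' hB) (hct' : (c, t') ∈ L) :
    ∀ c' ∈ C, ∀ b ∈ B, ∀ δ < b,
      ¬ (DiscoveredAt L c' b δ t ∧ ∀ s < t, ¬ DiscoveredAt L c' b δ s) := by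
  intro c' _ b hb δ _
  exact stmt8_general hL hct ht' (Nat.ModEq.of_dvd (hF2 b hb) hmod) hct'
end

section
/- Let L be any listening schedule and let t be a time slot with t ≤ max(B)·|C| − 1. Then there exists a channel c ∈ C such that the configuration (c, max(B), t mod max(B)) is not discovered at any time slot t' < t by L. -/
open scoped Classical

/-!
Exactly `t / b` slots before `t` are congruent to `t` modulo `b`. Each of them serves at most one
channel, so if `t < b * |C|`, fewer than `|C|` channels have been scanned in that residue class
before `t`.
-/

lemma card_filter_range_modEq_self {b : ℕ} (hb : 0 < b) (t : ℕ) :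
    ((Finset.range t).filter (· ≡ t [MOD b])).card = t / b := by
  rw [← Nat.count_eq_card_filter_range, Nat.count_modEq_card _ hb, if_neg (lt_irrefl _), add_zero]

lemma exists_channel_forall_not_scanned {α τ : Type*} {C : Finset α} {L : Set (α × τ)}
    (hL : ∀ c c' s, (c, s) ∈ L → (c', s) ∈ L → c = c') {S : Finset τ} (hS : S.card < C.card) :
    ∃ c ∈ C, ∀ s ∈ S, (c, s) ∉ L := by
  by_contra! all_scanned
  exact hS.not_ge <| Finset.card_le_card_of_forall_subsingleton (fun c s => (c, s) ∈ L) all_scanned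
    fun s _ c hc c' hc' => hL c c' s hc.2 hc'.2

theorem stmt9_general {α : Type*} {C : Finset α} {L : Set (α × ℕ)}
    (hL : ∀ c c' s, (c, s) ∈ L → (c', s) ∈ L → c = c') {b t : ℕ} (ht : t < b * C.card) :
    ∃ c ∈ C, ∀ t' < t, ¬ ((c, t') ∈ L ∧ t' ≡ t [MOD b]) := by
  have hb : 0 < b := Nat.pos_of_mul_pos_right (Nat.zero_lt_of_lt ht)
  have few_slots : ((Finset.range t).filter (· ≡ t [MOD b])).card < C.card := by
    rw [card_filter_range_modEq_self hb]
    exact Nat.div_lt_of_lt_mul ht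
  obtain ⟨c, hcC, hc⟩ := exists_channel_forall_not_scanned hL few_slots
  exact ⟨c, hcC, fun t' ht' ⟨scanned, hmod⟩ =>
    hc t' (Finset.mem_filter.mpr ⟨Finset.mem_range.mpr ht', hmod⟩) scanned⟩

/-- for any schedule `L` and any slot `t ≤ max(B)·|C| − 1`, some channel
`c ∈ C` exists such that configuration `(c, max(B), t mod max(B))` has not been
discovered at any earlier slot. -/
theorem stmt9 (C B : Finset ℕ) (hC : C.Nonempty) (hB : B.Nonempty)
    (hBpos : ∀ b ∈ B, 0 < b)
    (L : Set (ℕ × ℕ)) (hL : IsSchedule C L)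
    (t : ℕ) (ht : t ≤ B.max' hB * C.card - 1) :
    ∃ c ∈ C, ∀ t' < t, ¬ DiscoveredAt L c (B.max' hB) (t % B.max' hB) t' := by
  have hpos : 0 < B.max' hB * C.card := Nat.mul_pos (hBpos _ (B.max'_mem hB)) hC.card_pos
  exact stmt9_general hL.2 (Nat.lt_of_le_pred hpos ht)
end

section
/- Let B ∈ 𝔽₃ and let L be a recursive schedule. Then for every time slot t ∈ ℕ, the number of configurations κ ∈ K_BC with discovery time T_κ(L) = t equals |{b ∈ B : t ≤ b·|C| − 1}|. In particular, the number of configurations discovered per time slot is monotonically decreasing in t. -/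
open scoped Classical

/-!
Fix a beacon period `b`. A schedule listens to one channel per slot, and the slot determines the
offset modulo `b`, so distinct configurations with period `b` have distinct discovery times. There
are `b·|C|` of them and recursiveness confines their discovery times to the `b·|C|` slots
`0, …, b·|C| − 1`, so each of these slots discovers exactly one configuration with period `b`.
Counting the configurations discovered at slot `t` thus amounts to counting the periods `b` with
`t < b·|C|`.
-/

section

variable {C B : Finset ℕ} {L : Set (ℕ × ℕ)} {b c δ : ℕ}

theorem mem_KBC {κ : ℕ × ℕ × ℕ} : κ ∈ KBC C B ↔ κ.1 ∈ C ∧ κ.2.1 ∈ B ∧ κ.2.2 < κ.2.1 := by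
  simp only [KBC, Finset.mem_filter, Finset.mem_product, Finset.mem_range]
  constructor
  · rintro ⟨⟨hc, hb, -⟩, hδ⟩
    exact ⟨hc, hb, hδ⟩
  · rintro ⟨hc, hb, hδ⟩
    exact ⟨⟨hc, hb, hδ.trans_le (Finset.le_sup (f := id) hb)⟩, hδ⟩

theorem Complete.discoveredAt_discTime (hcomp : Complete C B L) (hc : c ∈ C) (hb : b ∈ B)
    (hδ : δ < b) : DiscoveredAt L c b δ (discTime L c b δ) :=
  Nat.sInf_mem (s := {t | DiscoveredAt L c b δ t}) (hcomp c hc b hb δ hδ)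

theorem Recursive.discTime_lt (hrec : Recursive C B L) (hc : c ∈ C) (hb : b ∈ B) (hδ : δ < b) :
    discTime L c b δ < b * C.card :=
  have hpos : 0 < b * C.card := Nat.mul_pos (Nat.zero_lt_of_lt hδ) (Finset.card_pos.2 ⟨c, hc⟩)
  Nat.lt_of_le_pred hpos (hrec.2 c hc b hb δ hδ)

theorem IsSchedule.injOn_discTime (hL : IsSchedule C L) (hcomp : Complete C B L) (hb : b ∈ B) :
    Set.InjOn (fun p : ℕ × ℕ => discTime L p.1 b p.2) (C ×ˢ Finset.range b : Finset (ℕ × ℕ)) := by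
  rintro ⟨c, δ⟩ hp ⟨c', δ'⟩ hp' (htime : discTime L c b δ = discTime L c' b δ')
  simp only [Finset.mem_coe, Finset.mem_product, Finset.mem_range] at hp hp'
  obtain ⟨hlisten, hmod⟩ := hcomp.discoveredAt_discTime hp.1 hb hp.2
  obtain ⟨hlisten', hmod'⟩ := hcomp.discoveredAt_discTime hp'.1 hb hp'.2
  rw [← htime] at hlisten' hmod'
  exact Prod.ext (hL.2 _ _ _ hlisten hlisten') (hmod.symm.trans hmod')

theorem Recursive.bijOn_discTime (hrec : Recursive C B L) (hL : IsSchedule C L) (hb : b ∈ B) :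
    Set.BijOn (fun p : ℕ × ℕ => discTime L p.1 b p.2)
      (C ×ˢ Finset.range b : Finset (ℕ × ℕ)) (Finset.range (b * C.card)) := by
  have hmaps : Set.MapsTo (fun p : ℕ × ℕ => discTime L p.1 b p.2)
      (C ×ˢ Finset.range b : Finset (ℕ × ℕ)) (Finset.range (b * C.card)) := by
    intro p hp
    simp only [Finset.mem_coe, Finset.mem_product, Finset.mem_range] at hp ⊢
    exact hrec.discTime_lt hp.1 hb hp.2
  have hinj := hL.injOn_discTime hrec.1 hb
  have hcard : (Finset.range (b * C.card)).card ≤ (C ×ˢ Finset.range b).card := by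
    rw [Finset.card_product, Finset.card_range, Finset.card_range, mul_comm]
  exact ⟨hmaps, hinj, Finset.surjOn_of_injOn_of_card_le _ hmaps hinj hcard⟩

theorem Recursive.card_filter_discTime_eq (hrec : Recursive C B L) (hL : IsSchedule C L) (t : ℕ) :
    ((KBC C B).filter (fun κ => discTime L κ.1 κ.2.1 κ.2.2 = t)).card
      = (B.filter (fun b => t < b * C.card)).card := by
  apply Finset.card_nbij (fun κ => κ.2.1)
  · rintro ⟨c, b, δ⟩ hκ
    obtain ⟨hmem, rfl⟩ := Finset.mem_filter.1 hκ
    obtain ⟨hc, hb, hδ⟩ := mem_KBC.1 hmem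
    exact Finset.mem_filter.2 ⟨hb, hrec.discTime_lt hc hb hδ⟩
  · rintro ⟨c, b, δ⟩ hκ ⟨c', b', δ'⟩ hκ' (rfl : b = b')
    obtain ⟨hmem, htime⟩ := Finset.mem_filter.1 hκ
    obtain ⟨hmem', htime'⟩ := Finset.mem_filter.1 hκ'
    obtain ⟨hc, hb, hδ⟩ := mem_KBC.1 hmem
    obtain ⟨hc', -, hδ'⟩ := mem_KBC.1 hmem'
    have hpair : (c, δ) = (c', δ') := hL.injOn_discTime hrec.1 hb
      (Finset.mk_mem_product hc (Finset.mem_range.2 hδ))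
      (Finset.mk_mem_product hc' (Finset.mem_range.2 hδ')) (htime.trans htime'.symm)
    obtain ⟨rfl, rfl⟩ := Prod.mk.inj hpair
    rfl
  · intro b hb
    obtain ⟨hb, ht⟩ := Finset.mem_filter.1 hb
    obtain ⟨⟨c, δ⟩, hp, htime⟩ :=
      (hrec.bijOn_discTime hL hb).surjOn (Finset.mem_coe.2 (Finset.mem_range.2 ht))
    obtain ⟨hc, hδ⟩ := Finset.mem_product.1 hp
    exact ⟨(c, b, δ), Finset.mem_filter.2 ⟨mem_KBC.2 ⟨hc, hb, Finset.mem_range.1 hδ⟩, htime⟩, rfl⟩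

theorem Recursive.antitone_card_filter_discTime_eq (hrec : Recursive C B L)
    (hL : IsSchedule C L) :
    Antitone fun t => ((KBC C B).filter (fun κ => discTime L κ.1 κ.2.1 κ.2.2 = t)).card := by
  intro t t' htt'
  simp only [hrec.card_filter_discTime_eq hL]
  exact Finset.card_le_card (Finset.monotone_filter_right B fun _ _ ht' => htt'.trans_lt ht')

end

theorem stmt12_general (C B : Finset ℕ) (hC : C.Nonempty) (hBpos : ∀ b ∈ B, 0 < b)
    (L : Set (ℕ × ℕ)) (hL : IsSchedule C L) (hrec : Recursive C B L) :
    (∀ t : ℕ,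
      ((KBC C B).filter (fun κ => discTime L κ.1 κ.2.1 κ.2.2 = t)).card
        = (B.filter (fun b => t ≤ b * C.card - 1)).card) ∧
    (∀ t t' : ℕ, t ≤ t' →
      ((KBC C B).filter (fun κ => discTime L κ.1 κ.2.1 κ.2.2 = t')).card
        ≤ ((KBC C B).filter (fun κ => discTime L κ.1 κ.2.1 κ.2.2 = t)).card) := by
  refine ⟨fun t => ?_, fun _ _ htt' => hrec.antitone_card_filter_discTime_eq hL htt'⟩
  rw [hrec.card_filter_discTime_eq hL]
  congr 1
  refine Finset.filter_congr fun b hb => ?_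
  exact Nat.lt_iff_le_pred (Nat.mul_pos (hBpos b hb) hC.card_pos)

/-- for `B ∈ 𝔽₃` and a recursive schedule `L`, the number of
configurations with discovery time `t` equals `|{b ∈ B : t ≤ b·|C| − 1}|`;
in particular it is monotonically decreasing in `t`. -/
theorem stmt12 (C B : Finset ℕ) (hC : C.Nonempty) (hB : B.Nonempty)
    (hBpos : ∀ b ∈ B, 0 < b)
    (hF3 : ∀ b ∈ B, ∀ b' ∈ B, b ∣ b' ∨ b' ∣ b)
    (L : Set (ℕ × ℕ)) (hL : IsSchedule C L) (hrec : Recursive C B L) :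
    (∀ t : ℕ,
      ((KBC C B).filter (fun κ => discTime L κ.1 κ.2.1 κ.2.2 = t)).card
        = (B.filter (fun b => t ≤ b * C.card - 1)).card) ∧
    (∀ t t' : ℕ, t ≤ t' →
      ((KBC C B).filter (fun κ => discTime L κ.1 κ.2.1 κ.2.2 = t')).card
        ≤ ((KBC C B).filter (fun κ => discTime L κ.1 κ.2.1 κ.2.2 = t)).card) :=
  stmt12_general C B hC hBpos L hL hrec
end

section
/- For every complete schedule L with some configuration having discovery time greater than lcm(B)·|C| − 1, there exists a complete schedule L* such that T_κ(L*) ≤ T_κ(L) for every configuration κ ∈ K_BC, T_κ(L*) ≤ lcm(B)·|C| − 1 for every κ ∈ K_BC, and T_κ(L*) < T_κ(L) for at least one κ. -/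
open scoped Classical

/-!
The slots congruent to `r` modulo `N = lcm(B)` all discover the same configurations of a channel,
so it suffices to scan each channel once in every residue class. Number the slots of a class by
`r, r + N, r + 2N, …`. The schedule occupies each slot with at most one channel, hence the channels
can be moved to distinct slots among the first `|C|` of the class without delaying any of them:
by pigeonhole some channel is not scanned in the first `|C| - 1` slots, so it can take the slot with
index `|C| - 1`, and the remaining channels are placed inductively.
-/

section Assignment

variable {α : Type*} {s : Finset α} {S : α → Set ℕ}

theorem exists_mem_lowerBounds_of_pairwiseDisjoint (hS : (s : Set α).PairwiseDisjoint S) {n : ℕ}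
    (hn : n < s.card) : ∃ a ∈ s, n ∈ lowerBounds (S a) := by
  by_contra! h_early
  have h_witness : ∀ a ∈ s, ∃ k ∈ S a, k < n := by
    simpa only [mem_lowerBounds, not_forall, not_le, exists_prop] using h_early
  choose! f hf_mem hf_lt using h_witness
  have hf_maps : Set.MapsTo f s (Finset.range n) := fun a ha => by simpa using hf_lt a ha
  obtain ⟨a, ha, a', ha', hne, heq⟩ :=
    Finset.exists_ne_map_eq_of_card_lt_of_maps_to (by simpa using hn) hf_maps
  exact Set.disjoint_left.mp (hS ha ha' hne) (hf_mem a ha) (heq ▸ hf_mem a' ha')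

theorem exists_injOn_lt_card_mem_lowerBounds (hS : (s : Set α).PairwiseDisjoint S) :
    ∃ σ : α → ℕ, Set.InjOn σ s ∧ ∀ a ∈ s, σ a < s.card ∧ σ a ∈ lowerBounds (S a) := by
  induction hn : s.card generalizing s with
  | zero =>
    obtain rfl := Finset.card_eq_zero.mp hn
    exact ⟨fun _ => 0, by simp, by simp⟩
  | succ n ih =>
    obtain ⟨last, hlast, hlast_le⟩ :=
      exists_mem_lowerBounds_of_pairwiseDisjoint hS (n := n) (by lia)
    obtain ⟨σ, hσ_inj, hσ⟩ := ih (s := s.erase last)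
      (hS.subset (by simp)) (by rw [Finset.card_erase_of_mem hlast]; lia)
    refine ⟨Function.update σ last n, ?_, fun a ha => ?_⟩
    · rw [← Finset.insert_erase hlast, Finset.coe_insert, Set.injOn_insert (by simp)]
      have h_eqOn : Set.EqOn σ (Function.update σ last n) (s.erase last) := fun a ha =>
        (Function.update_of_ne (Finset.ne_of_mem_erase ha) n σ).symm
      refine ⟨hσ_inj.congr h_eqOn, ?_⟩
      rintro ⟨a, ha, ha_eq⟩
      rw [← h_eqOn ha, Function.update_self] at ha_eq
      exact (hσ a ha).1.ne ha_eq
    · obtain rfl | hne := eq_or_ne a last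
      · simpa using hlast_le
      · obtain ⟨hσ_lt, hσ_le⟩ := hσ a (Finset.mem_erase.mpr ⟨hne, ha⟩)
        rw [Function.update_of_ne hne]
        exact ⟨hσ_lt.trans n.lt_succ_self, hσ_le⟩

end Assignment

/-- The schedule scanning each channel `c ∈ C` once per residue class modulo `N`: in the class of
`r < N`, whose slots are `r, r + N, r + 2N, …`, it scans `c` at the slot `r + N * σ r c`. -/
def residueSchedule (C : Finset ℕ) (N : ℕ) (σ : ℕ → ℕ → ℕ) : Set (ℕ × ℕ) :=
  {p | p.1 ∈ C ∧ σ (p.2 % N) p.1 = p.2 / N}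

section ResidueSchedule

variable {C : Finset ℕ} {N : ℕ} {σ : ℕ → ℕ → ℕ}

theorem isSchedule_residueSchedule (hσ : ∀ r, Set.InjOn (σ r) C) :
    IsSchedule C (residueSchedule C N σ) :=
  ⟨fun _ hp => hp.1, fun _ _ t h h' => hσ (t % N) h.1 h'.1 (h.2.trans h'.2.symm)⟩

theorem discoveredAt_residueSchedule (hN : 0 < N) {c b : ℕ} (hc : c ∈ C) (hb : b ∣ N) (t : ℕ) :
    DiscoveredAt (residueSchedule C N σ) c b (t % b) (t % N + N * σ (t % N) c) := by
  have h_mod : (t % N + N * σ (t % N) c) % N = t % N := by simp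
  have h_div : (t % N + N * σ (t % N) c) / N = σ (t % N) c := by
    rw [Nat.add_mul_div_left _ _ hN, Nat.div_eq_of_lt (Nat.mod_lt t hN), zero_add]
  exact ⟨⟨hc, by rw [h_mod, h_div]⟩, Nat.ModEq.of_dvd hb h_mod⟩

theorem discTime_residueSchedule_le (hN : 0 < N) {c b : ℕ} (hc : c ∈ C) (hb : b ∣ N) (t : ℕ) :
    discTime (residueSchedule C N σ) c b (t % b) ≤ t % N + N * σ (t % N) c :=
  Nat.sInf_le (discoveredAt_residueSchedule hN hc hb t)

theorem discTime_residueSchedule_lt_mul (hN : 0 < N) {c b n : ℕ} (hc : c ∈ C) (hb : b ∣ N)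
    (t : ℕ) (hσ : σ (t % N) c < n) :
    discTime (residueSchedule C N σ) c b (t % b) < N * n :=
  calc
    _ ≤ t % N + N * σ (t % N) c := discTime_residueSchedule_le hN hc hb t
    _ < N + N * σ (t % N) c := Nat.add_lt_add_right (Nat.mod_lt t hN) _
    _ = N * (σ (t % N) c + 1) := by ring
    _ ≤ N * n := Nat.mul_le_mul_left N hσ

theorem discTime_residueSchedule_le_of_le_div (hN : 0 < N) {c b t : ℕ} (hc : c ∈ C) (hb : b ∣ N)
    (hσ : σ (t % N) c ≤ t / N) :
    discTime (residueSchedule C N σ) c b (t % b) ≤ t :=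
  calc
    _ ≤ t % N + N * σ (t % N) c := discTime_residueSchedule_le hN hc hb t
    _ ≤ t % N + N * (t / N) := by gcongr
    _ = t := Nat.mod_add_div t N

end ResidueSchedule

theorem exists_slot_assignment {C : Finset ℕ} {L : Set (ℕ × ℕ)} (hL : IsSchedule C L) (N : ℕ) :
    ∃ σ : ℕ → ℕ → ℕ, (∀ r, Set.InjOn (σ r) C) ∧ (∀ r, ∀ c ∈ C, σ r c < C.card) ∧
      ∀ c ∈ C, ∀ t, (c, t) ∈ L → σ (t % N) c ≤ t / N := by
  have h_disjoint (r : ℕ) :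
      (C : Set ℕ).PairwiseDisjoint fun c => {k | (c, r + N * k) ∈ L} := fun c _ c' _ hne =>
    Set.disjoint_left.mpr fun k hk hk' => hne (hL.2 c c' (r + N * k) hk hk')
  choose σ hσ_inj hσ using fun r => exists_injOn_lt_card_mem_lowerBounds (h_disjoint r)
  refine ⟨σ, hσ_inj, fun r c hc => (hσ r c hc).1, fun c hc t ht => (hσ (t % N) c hc).2 ?_⟩
  simpa only [Set.mem_ofPred_eq, Nat.mod_add_div] using ht

theorem stmt14_general (C B : Finset ℕ) (hBpos : ∀ b ∈ B, 0 < b)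
    (L : Set (ℕ × ℕ)) (hL : IsSchedule C L) :
    ∃ Lstar : Set (ℕ × ℕ), IsSchedule C Lstar ∧ Complete C B Lstar ∧
      (∀ c ∈ C, ∀ b ∈ B, ∀ δ t, DiscoveredAt L c b δ t → discTime Lstar c b δ ≤ t) ∧
      (∀ c ∈ C, ∀ b ∈ B, ∀ δ < b, discTime Lstar c b δ ≤ B.lcm id * C.card - 1) := by
  have hN : 0 < B.lcm id :=
    Nat.pos_of_ne_zero (Finset.lcm_ne_zero_iff.mpr fun b hb => (hBpos b hb).ne')
  have hdvd : ∀ b ∈ B, b ∣ B.lcm id := fun b hb => Finset.dvd_lcm (f := id) hb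
  obtain ⟨σ, hσ_inj, hσ_lt, hσ_le⟩ := exists_slot_assignment hL (B.lcm id)
  refine ⟨residueSchedule C (B.lcm id) σ, isSchedule_residueSchedule hσ_inj, ?_, ?_, ?_⟩
  · intro c hc b hb δ hδ
    have h_discovered := discoveredAt_residueSchedule (σ := σ) hN hc (hdvd b hb) δ
    exact ⟨_, Nat.mod_eq_of_lt hδ ▸ h_discovered⟩
  · rintro c hc b hb _ t ⟨ht, rfl⟩
    exact discTime_residueSchedule_le_of_le_div hN hc (hdvd b hb) (hσ_le c hc t ht)
  · intro c hc b hb δ hδ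
    have h_lt := discTime_residueSchedule_lt_mul hN hc (hdvd b hb) δ (hσ_lt _ c hc)
    exact Nat.le_sub_one_of_lt (Nat.mod_eq_of_lt hδ ▸ h_lt)

/-- any complete schedule with some discovery time exceeding
`lcm(B)·|C| − 1` can be improved to a complete schedule whose discovery times are
pointwise no larger, all at most `lcm(B)·|C| − 1`, and strictly smaller for at least
one configuration. -/
theorem stmt14 (C B : Finset ℕ) (hC : C.Nonempty) (hB : B.Nonempty)
    (hBpos : ∀ b ∈ B, 0 < b)
    (L : Set (ℕ × ℕ)) (hL : IsSchedule C L) (hcomp : Complete C B L)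
    (hbad : ∃ c ∈ C, ∃ b ∈ B, ∃ δ < b,
      B.lcm id * C.card - 1 < discTime L c b δ) :
    ∃ Lstar : Set (ℕ × ℕ), IsSchedule C Lstar ∧ Complete C B Lstar ∧
      (∀ c ∈ C, ∀ b ∈ B, ∀ δ < b, discTime Lstar c b δ ≤ discTime L c b δ) ∧
      (∀ c ∈ C, ∀ b ∈ B, ∀ δ < b, discTime Lstar c b δ ≤ B.lcm id * C.card - 1) ∧
      (∃ c ∈ C, ∃ b ∈ B, ∃ δ < b, discTime Lstar c b δ < discTime L c b δ) := by
  obtain ⟨Lstar, h_sched, h_complete, h_le, h_bound⟩ := stmt14_general C B hBpos L hL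
  obtain ⟨c, hc, b, hb, δ, hδ, h_late⟩ := hbad
  exact ⟨Lstar, h_sched, h_complete,
    fun c hc b hb δ hδ => h_le c hc b hb δ _ (Nat.sInf_mem (hcomp c hc b hb δ hδ)), h_bound,
    c, hc, b, hb, δ, hδ, (h_bound c hc b hb δ hδ).trans_lt h_late⟩
end
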